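/- There is a constant C such that |τ_λ(g ∘ h) − τ_λ(g) − τ_λ(h)| ≤ C for all g, h ∈ Symp(D); that is, τ_λ : Symp(D) → ℝ is a quasi-morphism. -/

import Mathlib

open MeasureTheory Filter Topology Set Function Real

noncomputable section

/-- The closed unit disk in `ℝ²`. -/
def disk : Set (ℝ × ℝ) := {p | p.1 ^ 2 + p.2 ^ 2 ≤ 1}

/-- The boundary circle of the unit disk. -/
def bdry : Set (ℝ × ℝ) := {p | p.1 ^ 2 + p.2 ^ 2 = 1}

/-- Partial derivative in the `x`-direction. -/
def pdx (f : ℝ × ℝ → ℝ) (p : ℝ × ℝ) : ℝ := fderiv ℝ f p (1, 0)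

/-- Partial derivative in the `y`-direction. -/
def pdy (f : ℝ × ℝ → ℝ) (p : ℝ × ℝ) : ℝ := fderiv ℝ f p (0, 1)

/-- The Jacobian determinant of a map `ℝ² → ℝ²`. -/
def jacDet (g : ℝ × ℝ → ℝ × ℝ) (p : ℝ × ℝ) : ℝ :=
  pdx (fun q => (g q).1) p * pdy (fun q => (g q).2) p -
    pdy (fun q => (g q).1) p * pdx (fun q => (g q).2) p

/-- `g` represents an element of `Symp(D)`: a `C^∞` diffeomorphism of the closed
unit disk onto itself (smooth up to the boundary, i.e. the restriction of a
globally smooth map with globally smooth inverse on the disk) whose Jacobian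
determinant is identically `1` on the disk. -/
def IsSymp (g : ℝ × ℝ → ℝ × ℝ) : Prop :=
  ContDiff ℝ (⊤ : ℕ∞) g ∧ MapsTo g disk disk ∧ (∀ p ∈ disk, jacDet g p = 1) ∧
    ∃ g' : ℝ × ℝ → ℝ × ℝ, ContDiff ℝ (⊤ : ℕ∞) g' ∧ MapsTo g' disk disk ∧
      (∀ p ∈ disk, g' (g p) = p) ∧ (∀ p ∈ disk, g (g' p) = p)

/-- `g` represents an element of `G_o`: a symplectomorphism of the disk fixing the origin. -/
def IsSympO (g : ℝ × ℝ → ℝ × ℝ) : Prop :=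
  IsSymp g ∧ g (0, 0) = (0, 0)

/-- `τ_λ(g) = ∫_D g*λ ∧ λ` for `λ = (x dy - y dx)/2`, written out in coordinates. -/
def tauL (g : ℝ × ℝ → ℝ × ℝ) : ℝ :=
  (1 / 4) * ∫ p in disk,
    (p.1 * ((g p).1 * pdx (fun q => (g q).2) p - (g p).2 * pdx (fun q => (g q).1) p) +
     p.2 * ((g p).1 * pdy (fun q => (g q).2) p - (g p).2 * pdy (fun q => (g q).1) p))

/-- `σ(g) = ∫_γ (g*λ - λ)` along the radial path `γ(t) = (t,0)`, in coordinates. -/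
def sigmaQ (g : ℝ × ℝ → ℝ × ℝ) : ℝ :=
  (1 / 2) * ∫ t in (0:ℝ)..1,
    ((g (t, 0)).1 * pdx (fun q => (g q).2) (t, 0) -
      (g (t, 0)).2 * pdx (fun q => (g q).1) (t, 0))

/-- `G` is a smooth isotopy in `Symp(D)` starting at the identity. -/
def IsIsotopy (G : ℝ → ℝ × ℝ → ℝ × ℝ) : Prop :=
  ContDiff ℝ (⊤ : ℕ∞) (fun q : ℝ × (ℝ × ℝ) => G q.1 q.2) ∧
    (∀ t ∈ Icc (0:ℝ) 1, IsSymp (G t)) ∧ (∀ p ∈ disk, G 0 p = p)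

/-- `f` is a family of Hamiltonian functions for the isotopy `G`, i.e.
`i_{X_t} ω = d f_t` where `X_t = (∂g_t/∂t) ∘ g_t⁻¹`; since `g_t` maps the disk
onto itself this is expressed at the points `G t p`, `p ∈ D`. -/
def IsHam (G : ℝ → ℝ × ℝ → ℝ × ℝ) (f : ℝ → ℝ × ℝ → ℝ) : Prop :=
  ContDiff ℝ (⊤ : ℕ∞) (fun q : ℝ × (ℝ × ℝ) => f q.1 q.2) ∧
    ∀ t ∈ Icc (0:ℝ) 1, ∀ p ∈ disk,
      pdx (f t) (G t p) = -(deriv (fun s => G s p) t).2 ∧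
      pdy (f t) (G t p) = (deriv (fun s => G s p) t).1

/-- `φ` is the lift of the boundary isotopy of `G`, with `φ 0 = id`. -/
def IsBoundaryLift (G : ℝ → ℝ × ℝ → ℝ × ℝ) (φ : ℝ → ℝ → ℝ) : Prop :=
  ContDiff ℝ (⊤ : ℕ∞) (fun q : ℝ × ℝ => φ q.1 q.2) ∧
    (∀ t ∈ Icc (0:ℝ) 1, StrictMono (φ t) ∧ ∀ θ : ℝ, φ t (θ + 2 * π) = φ t θ + 2 * π) ∧
    (∀ θ : ℝ, φ 0 θ = θ) ∧
    (∀ t ∈ Icc (0:ℝ) 1, ∀ θ : ℝ,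
      G t (Real.cos θ, Real.sin θ) = (Real.cos (φ t θ), Real.sin (φ t θ)))

/-! For `g ∈ Symp(D)` the action form `α_g = g^*λ - λ` is closed on the disk, so `α_g = dF`. The
cocycle identity `α_{g ∘ h} = h^*α_g + α_h` and the invariance of the integral under `h` give
`τ_λ(g ∘ h) - τ_λ(g) - τ_λ(h) = -∫_D h^*α_g ∧ α_h`, and since `h^*α_g = d(F ∘ h)` with `α_h` closed,
Stokes' theorem turns the right-hand side into `-∮ (F ∘ h) α_h` over the boundary circle.

Now `g` maps the circle to itself preserving orientation, so `g^*λ` is nonnegative along it and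
`α_g ≥ -dθ/2` there. As `∮ α_g = 0`, this one-sided bound controls the total variation:
`∮ |α_g| ≤ 2π`. Hence `F` differs from a constant by at most `2π` on the circle, and the defect is
at most `(2π)²`, whatever `g` and `h`.
-/

section PlanarLinearAlgebra

/-- The standard area form `dx ∧ dy` on vectors of the plane. -/
def area (v w : ℝ × ℝ) : ℝ := v.1 * w.2 - v.2 * w.1

/-- The wedge product of two covectors of the plane, as the coefficient of `dx ∧ dy`. -/
def wedge (a b : ℝ × ℝ →L[ℝ] ℝ) : ℝ := a (1, 0) * b (0, 1) - a (0, 1) * b (1, 0)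

lemma eq_fst_smul_add_snd_smul (v : ℝ × ℝ) :
    v = v.1 • ((1 : ℝ), (0 : ℝ)) + v.2 • ((0 : ℝ), (1 : ℝ)) := by
  ext <;> simp

lemma det_eq_area (L : ℝ × ℝ →L[ℝ] ℝ × ℝ) : L.det = area (L (1, 0)) (L (0, 1)) := by
  rw [ContinuousLinearMap.det, ← LinearMap.det_toMatrix (Module.Basis.finTwoProd ℝ),
    Matrix.det_fin_two]
  simp [LinearMap.toMatrix_apply, area, mul_comm]

lemma sub_swap_eq_mul_area (B : ℝ × ℝ →L[ℝ] ℝ × ℝ →L[ℝ] ℝ) (v w : ℝ × ℝ) :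
    B v w - B w v = (B (1, 0) (0, 1) - B (0, 1) (1, 0)) * area v w := by
  rw [eq_fst_smul_add_snd_smul v, eq_fst_smul_add_snd_smul w]
  simp only [map_add, map_smul, _root_.add_apply, _root_.smul_apply, smul_eq_mul, area,
    Prod.fst_add, Prod.snd_add, Prod.smul_fst, Prod.smul_snd]
  ring

lemma wedge_add_left (a b c : ℝ × ℝ →L[ℝ] ℝ) : wedge (a + b) c = wedge a c + wedge b c := by
  simp only [wedge, _root_.add_apply]
  ring

lemma wedge_add_right (a b c : ℝ × ℝ →L[ℝ] ℝ) : wedge a (b + c) = wedge a b + wedge a c := by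
  simp only [wedge, _root_.add_apply]
  ring

lemma wedge_comp (a b : ℝ × ℝ →L[ℝ] ℝ) (L : ℝ × ℝ →L[ℝ] ℝ × ℝ) :
    wedge (a.comp L) (b.comp L) = L.det * wedge a b := by
  have h := sub_swap_eq_mul_area (a.smulRight b) (L (1, 0)) (L (0, 1))
  simp only [ContinuousLinearMap.smulRight_apply, _root_.smul_apply, smul_eq_mul] at h
  simp only [wedge, ContinuousLinearMap.comp_apply, det_eq_area]
  linarith

lemma area_map (L : ℝ × ℝ →L[ℝ] ℝ × ℝ) (v w : ℝ × ℝ) :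
    area (L v) (L w) = L.det * area v w := by
  rw [det_eq_area, eq_fst_smul_add_snd_smul v, eq_fst_smul_add_snd_smul w]
  simp only [map_add, map_smul, smul_eq_mul, area, Prod.fst_add, Prod.snd_add, Prod.smul_fst,
    Prod.smul_snd]
  ring

end PlanarLinearAlgebra

section DifferentialForms

variable {E F G : Type*} [NormedAddCommGroup E] [NormedSpace ℝ E] [NormedAddCommGroup F]
  [NormedSpace ℝ F] [NormedAddCommGroup G] [NormedSpace ℝ G]

/-- The pullback `f^*β` of a `1`-form `β` along a map `f`; the form is encoded as a field of
continuous linear functionals. -/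
def pullbackForm (f : E → F) (β : F → F →L[ℝ] ℝ) (p : E) : E →L[ℝ] ℝ :=
  (β (f p)).comp (fderiv ℝ f p)

lemma pullbackForm_sub (f : E → F) (β γ : F → F →L[ℝ] ℝ) :
    pullbackForm f (β - γ) = pullbackForm f β - pullbackForm f γ := by
  ext p v
  simp [pullbackForm]

lemma pullbackForm_comp {f : F → G} {h : E → F} (hf : Differentiable ℝ f)
    (hh : Differentiable ℝ h) (β : G → G →L[ℝ] ℝ) :
    pullbackForm (f ∘ h) β = pullbackForm h (pullbackForm f β) := by
  ext p v
  simp [pullbackForm, fderiv_comp p (hf _) (hh p)]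

lemma contDiff_pullbackForm {f : E → F} {β : F → F →L[ℝ] ℝ} {m n : WithTop ℕ∞}
    (hf : ContDiff ℝ n f) (hβ : ContDiff ℝ m β) (hmn : m + 1 ≤ n) :
    ContDiff ℝ m (pullbackForm f β) :=
  (hβ.comp (hf.of_le (le_self_add.trans hmn))).clm_comp (hf.fderiv_right hmn)

lemma continuousOn_pullbackForm {f : E → F} {β : F → F →L[ℝ] ℝ} {s : Set E} {t : Set F}
    (hf : ContDiff ℝ 1 f) (hβ : ContinuousOn β t) (hst : MapsTo f s t) :
    ContinuousOn (pullbackForm f β) s :=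
  (hβ.comp hf.continuous.continuousOn hst).clm_comp
    (hf.continuous_fderiv one_ne_zero).continuousOn

lemma hasFDerivWithinAt_comp_pullbackForm {f : E → F} {A : F → ℝ} {α : F → F →L[ℝ] ℝ}
    {s : Set E} {t : Set F} {p : E} (hA : HasFDerivWithinAt A (α (f p)) t (f p))
    (hf : DifferentiableAt ℝ f p) (hst : MapsTo f s t) :
    HasFDerivWithinAt (A ∘ f) (pullbackForm f α p) s p :=
  hA.comp p hf.hasFDerivAt.hasFDerivWithinAt hst

lemma hasFDerivAt_pullbackForm {f : E → F} {β : F → F →L[ℝ] ℝ} {p : E}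
    (hf : ContDiffAt ℝ 2 f p) (hβ : DifferentiableAt ℝ β (f p)) :
    HasFDerivAt (pullbackForm f β)
      ((ContinuousLinearMap.compL ℝ E F ℝ (β (f p))).comp (fderiv ℝ (fderiv ℝ f) p) +
        ((ContinuousLinearMap.compL ℝ E F ℝ).flip (fderiv ℝ f p)).comp
          ((fderiv ℝ β (f p)).comp (fderiv ℝ f p))) p := by
  have hDf : DifferentiableAt ℝ (fderiv ℝ f) p :=
    (hf.fderiv_right (m := 1) one_add_one_eq_two.le).differentiableAt one_ne_zero
  exact (hβ.hasFDerivAt.comp p (hf.differentiableAt two_ne_zero).hasFDerivAt).clm_comp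
    hDf.hasFDerivAt

lemma fderiv_pullbackForm_sub_swap {f : E → F} {β : F → F →L[ℝ] ℝ} {p : E}
    (hf : ContDiffAt ℝ 2 f p) (hβ : DifferentiableAt ℝ β (f p)) (v w : E) :
    fderiv ℝ (pullbackForm f β) p v w - fderiv ℝ (pullbackForm f β) p w v =
      fderiv ℝ β (f p) (fderiv ℝ f p v) (fderiv ℝ f p w) -
        fderiv ℝ β (f p) (fderiv ℝ f p w) (fderiv ℝ f p v) := by
  have hsymm : fderiv ℝ (fderiv ℝ f) p v w = fderiv ℝ (fderiv ℝ f) p w v :=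
    hf.isSymmSndFDerivAt minSmoothness_of_isRCLikeNormedField.le v w
  rw [(hasFDerivAt_pullbackForm hf hβ).fderiv]
  simp [hsymm]

end DifferentialForms

section PlanarForms

/-- The exterior derivative of a `1`-form on the plane, as the coefficient of `dx ∧ dy`. -/
def curl (β : ℝ × ℝ → ℝ × ℝ →L[ℝ] ℝ) (p : ℝ × ℝ) : ℝ :=
  fderiv ℝ β p (1, 0) (0, 1) - fderiv ℝ β p (0, 1) (1, 0)

lemma curl_sub {β γ : ℝ × ℝ → ℝ × ℝ →L[ℝ] ℝ} {p : ℝ × ℝ} (hβ : DifferentiableAt ℝ β p)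
    (hγ : DifferentiableAt ℝ γ p) : curl (β - γ) p = curl β p - curl γ p := by
  simp only [curl, fderiv_sub hβ hγ, _root_.sub_apply]
  ring

lemma curl_smul {A : ℝ × ℝ → ℝ} {β : ℝ × ℝ → ℝ × ℝ →L[ℝ] ℝ} {p : ℝ × ℝ}
    (hA : DifferentiableAt ℝ A p) (hβ : DifferentiableAt ℝ β p) :
    curl (A • β) p = wedge (fderiv ℝ A p) (β p) + A p * curl β p := by
  simp only [curl, wedge, fderiv_smul hA hβ, _root_.add_apply, _root_.smul_apply, smul_eq_mul,
    ContinuousLinearMap.smulRight_apply]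
  ring

lemma curl_pullbackForm {f : ℝ × ℝ → ℝ × ℝ} {β : ℝ × ℝ → ℝ × ℝ →L[ℝ] ℝ} {p : ℝ × ℝ}
    (hf : ContDiffAt ℝ 2 f p) (hβ : DifferentiableAt ℝ β (f p)) :
    curl (pullbackForm f β) p = (fderiv ℝ f p).det * curl β (f p) := by
  rw [curl, fderiv_pullbackForm_sub_swap hf hβ, sub_swap_eq_mul_area, ← det_eq_area, mul_comm,
    curl]

lemma continuousOn_wedge {X : Type*} [TopologicalSpace X] {s : Set X}
    {α β : X → ℝ × ℝ →L[ℝ] ℝ} (hα : ContinuousOn α s) (hβ : ContinuousOn β s) :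
    ContinuousOn (fun p => wedge (α p) (β p)) s := by
  unfold wedge
  fun_prop

lemma exists_hasFDerivWithinAt_of_curl_eq_zero {s : Set (ℝ × ℝ)} (hs : Convex ℝ s)
    {β : ℝ × ℝ → ℝ × ℝ →L[ℝ] ℝ} (hβ : ∀ p ∈ s, DifferentiableAt ℝ β p)
    (hcurl : ∀ p ∈ s, curl β p = 0) :
    ∃ A : ℝ × ℝ → ℝ, ∀ p ∈ s, HasFDerivWithinAt A (β p) s p := by
  refine hs.exists_forall_hasFDerivWithinAt_of_hasFDerivWithinAt_symmetric
    (fun p hp => (hβ p hp).hasFDerivAt.hasFDerivWithinAt) fun p hp v _ w _ => ?_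
  have hsymm := sub_swap_eq_mul_area (fderiv ℝ β p) v w
  rwa [← curl, hcurl p hp, zero_mul, sub_eq_zero] at hsymm

lemma Ioo_prod_Ioo_ae_eq_Icc (a b : ℝ × ℝ) :
    (Ioo a.1 b.1 ×ˢ Ioo a.2 b.2 : Set (ℝ × ℝ)) =ᵐ[volume] Icc a b :=
  Icc_prod_eq a b ▸ Measure.set_prod_ae_eq Ioo_ae_eq_Icc Ioo_ae_eq_Icc

lemma integral_curl_Ioo_prod_Ioo {a b : ℝ × ℝ} (hab : a ≤ b) {γ : ℝ × ℝ → ℝ × ℝ →L[ℝ] ℝ}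
    (hγ : ContinuousOn γ (Icc a b))
    (hγ' : ∀ p ∈ Ioo a.1 b.1 ×ˢ Ioo a.2 b.2, DifferentiableAt ℝ γ p)
    (hcurl : IntegrableOn (curl γ) (Ioo a.1 b.1 ×ˢ Ioo a.2 b.2)) :
    ∫ p in Ioo a.1 b.1 ×ˢ Ioo a.2 b.2, curl γ p =
      (∫ x in a.1..b.1, γ (x, a.2) (1, 0)) + (∫ y in a.2..b.2, γ (b.1, y) (0, 1)) -
        (∫ x in a.1..b.1, γ (x, b.2) (1, 0)) - ∫ y in a.2..b.2, γ (a.1, y) (0, 1) := by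
  have hderiv (v : ℝ × ℝ) (p : ℝ × ℝ) (hp : DifferentiableAt ℝ γ p) :
      HasFDerivAt (fun q => γ q v) ((fderiv ℝ γ p).flip v) p := by
    simpa using hp.hasFDerivAt.clm_apply (hasFDerivAt_const v p)
  have hdiv := integral_divergence_prod_Icc_of_hasFDerivAt_of_le
    (fun p => γ p (0, 1)) (fun p => -γ p (1, 0)) (fun p => (fderiv ℝ γ p).flip (0, 1))
    (fun p => -(fderiv ℝ γ p).flip (1, 0)) a b hab (hγ.clm_apply continuousOn_const)
    (hγ.clm_apply continuousOn_const).neg (fun p hp => hderiv _ p (hγ' p hp))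
    (fun p hp => (hderiv _ p (hγ' p hp)).neg)
    (hcurl.congr_set_ae (Ioo_prod_Ioo_ae_eq_Icc a b).symm)
  simp only [intervalIntegral.integral_neg] at hdiv
  rw [setIntegral_congr_set (Ioo_prod_Ioo_ae_eq_Icc a b)]
  exact hdiv.trans (by ring)

end PlanarForms

section Disk

lemma disk_eq_preimage_closedBall :
    disk = Complex.equivRealProdCLM.symm ⁻¹' Metric.closedBall 0 1 := by
  ext p
  simp [disk, Complex.norm_def, Complex.normSq_apply, sq]

lemma convex_disk : Convex ℝ disk := by
  rw [disk_eq_preimage_closedBall]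
  exact (convex_closedBall 0 1).linear_preimage
    Complex.equivRealProdCLM.symm.toLinearEquiv.toLinearMap

lemma isCompact_disk : IsCompact disk := by
  rw [disk_eq_preimage_closedBall]
  exact Complex.equivRealProdCLM.symm.toHomeomorph.isCompact_preimage.2 (isCompact_closedBall 0 1)

lemma interior_disk : interior disk = {p | p.1 ^ 2 + p.2 ^ 2 < 1} := by
  have hinterior := Complex.equivRealProdCLM.symm.toHomeomorph.preimage_interior
    (Metric.closedBall 0 1)
  rw [interior_closedBall _ one_ne_zero] at hinterior
  rw [disk_eq_preimage_closedBall]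
  refine hinterior.symm.trans ?_
  ext p
  simp [Complex.norm_def, Complex.normSq_apply, Real.sqrt_lt', sq]

lemma diff_interior_disk : disk \ interior disk = bdry := by
  rw [interior_disk]
  ext p
  simp [disk, bdry, le_antisymm_iff]

lemma cos_sin_mem_bdry (θ : ℝ) : (cos θ, sin θ) ∈ bdry := cos_sq_add_sin_sq θ

lemma bdry_subset_disk : bdry ⊆ disk := fun _ hp => le_of_eq hp

lemma exists_cos_sin_eq {p : ℝ × ℝ} (hp : p ∈ bdry) :
    ∃ θ ∈ Ioc (-π) π, (cos θ, sin θ) = p := by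
  set z : ℂ := Complex.equivRealProdCLM.symm p
  have hz : ‖z‖ = 1 := by
    simpa [z, bdry, Complex.norm_def, Complex.normSq_apply, sq] using hp
  refine ⟨z.arg, Complex.arg_mem_Ioc z, ?_⟩
  have hre := Complex.norm_mul_cos_arg z
  have him := Complex.norm_mul_sin_arg z
  rw [hz, one_mul] at hre him
  rw [hre, him]
  simp [z]

end Disk

section Green

/-- The coefficient of `dθ` in the restriction of a `1`-form to the unit circle. -/
def tangential (β : ℝ × ℝ → ℝ × ℝ →L[ℝ] ℝ) (θ : ℝ) : ℝ :=
  β (cos θ, sin θ) (-sin θ, cos θ)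

lemma contDiff_polarCoord_symm {n : WithTop ℕ∞} : ContDiff ℝ n polarCoord.symm := by
  change ContDiff ℝ n fun q : ℝ × ℝ => (q.1 * cos q.2, q.1 * sin q.2)
  fun_prop

lemma fderiv_polarCoord_symm_apply (q v : ℝ × ℝ) :
    fderiv ℝ polarCoord.symm q v =
      v.1 • (cos q.2, sin q.2) + (q.1 * v.2) • (-sin q.2, cos q.2) := by
  rw [(hasFDerivAt_polarCoord_symm q).fderiv, fderivPolarCoordSymm,
    Matrix.toLin_finTwoProd_toContinuousLinearMap]
  ext <;>
    simp only [ContinuousLinearMap.prod_apply, _root_.add_apply, _root_.smul_apply,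
      ContinuousLinearMap.coe_fst', ContinuousLinearMap.coe_snd', smul_eq_mul, Prod.smul_mk,
      Prod.mk_add_mk] <;>
    ring

lemma polarCoord_symm_fst_sq_add_snd_sq (q : ℝ × ℝ) :
    (polarCoord.symm q).1 ^ 2 + (polarCoord.symm q).2 ^ 2 = q.1 ^ 2 := by
  simp only [polarCoord_symm_apply]
  linear_combination q.1 ^ 2 * cos_sq_add_sin_sq q.2

lemma polarCoord_symm_mem_disk_iff {q : ℝ × ℝ} (hq : 0 ≤ q.1) :
    polarCoord.symm q ∈ disk ↔ q.1 ≤ 1 := by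
  rw [disk, mem_ofPred_eq, polarCoord_symm_fst_sq_add_snd_sq, sq_le_one_iff₀ hq]

lemma polarCoord_symm_mem_interior_disk_iff {q : ℝ × ℝ} (hq : 0 ≤ q.1) :
    polarCoord.symm q ∈ interior disk ↔ q.1 < 1 := by
  rw [interior_disk, mem_ofPred_eq, polarCoord_symm_fst_sq_add_snd_sq, sq_lt_one_iff₀ hq]

lemma setIntegral_disk_eq_polarCoord {E : Type*} [NormedAddCommGroup E] [NormedSpace ℝ E]
    (f : ℝ × ℝ → E) :
    ∫ p in disk, f p =
      ∫ q in Ioo (0 : ℝ) 1 ×ˢ Ioo (-π) π, q.1 • f (polarCoord.symm q) := by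
  have hpreimage : polarCoord.target ∩ polarCoord.symm ⁻¹' disk = Ioc (0 : ℝ) 1 ×ˢ Ioo (-π) π := by
    ext q
    simp only [polarCoord_target, mem_inter_iff, mem_prod, mem_Ioi, mem_preimage, mem_Ioc]
    grind [polarCoord_symm_mem_disk_iff]
  have hmeas : MeasurableSet (polarCoord.symm ⁻¹' disk) :=
    (isCompact_disk.isClosed.preimage continuous_polarCoord_symm).measurableSet
  calc ∫ p in disk, f p
      = ∫ q in polarCoord.target, q.1 • disk.indicator f (polarCoord.symm q) := by
        rw [integral_comp_polarCoord_symm, integral_indicator isCompact_disk.measurableSet]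
    _ = ∫ q in polarCoord.target,
          (polarCoord.symm ⁻¹' disk).indicator (fun q => q.1 • f (polarCoord.symm q)) q := by
        simp only [indicator_smul]
        rfl
    _ = ∫ q in Ioo (0 : ℝ) 1 ×ˢ Ioo (-π) π, q.1 • f (polarCoord.symm q) := by
        rw [setIntegral_indicator hmeas, hpreimage]
        exact setIntegral_congr_set (Measure.set_prod_ae_eq Ioo_ae_eq_Ioc.symm .rfl)

lemma pullbackForm_polarCoord_symm_apply (γ : ℝ × ℝ → ℝ × ℝ →L[ℝ] ℝ) (r θ : ℝ) (v : ℝ × ℝ) :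
    pullbackForm polarCoord.symm γ (r, θ) v =
      γ (r * cos θ, r * sin θ) (v.1 • (cos θ, sin θ) + (r * v.2) • (-sin θ, cos θ)) := by
  rw [pullbackForm, ContinuousLinearMap.comp_apply, fderiv_polarCoord_symm_apply]
  rfl

-- Green's theorem on the rectangle of polar coordinates: the sides `θ = ±π` cancel and the side
-- `r = 0` contributes nothing because the polar map collapses it to a point.
lemma setIntegral_curl_disk {γ : ℝ × ℝ → ℝ × ℝ →L[ℝ] ℝ} {c : ℝ × ℝ → ℝ}
    (hγ : ContinuousOn γ disk) (hγ' : ∀ p ∈ interior disk, DifferentiableAt ℝ γ p)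
    (hc : ContinuousOn c disk) (hcurl : ∀ p ∈ interior disk, curl γ p = c p) :
    ∫ p in disk, c p = ∫ θ in (-π)..π, tangential γ θ := by
  have hmaps : MapsTo polarCoord.symm (Icc ((0 : ℝ), -π) (1, π)) disk := fun q hq =>
    (polarCoord_symm_mem_disk_iff hq.1.1).2 hq.2.1
  have hinterior : ∀ q ∈ Ioo (0 : ℝ) 1 ×ˢ Ioo (-π) π, polarCoord.symm q ∈ interior disk :=
    fun q hq => (polarCoord_symm_mem_interior_disk_iff hq.1.1.le).2 hq.1.2
  have hcurl_polar : EqOn (curl (pullbackForm polarCoord.symm γ))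
      (fun q => q.1 * c (polarCoord.symm q)) (Ioo (0 : ℝ) 1 ×ˢ Ioo (-π) π) := fun q hq => by
    rw [curl_pullbackForm contDiff_polarCoord_symm.contDiffAt (hγ' _ (hinterior q hq)),
      (hasFDerivAt_polarCoord_symm q).fderiv, det_fderivPolarCoordSymm, hcurl _ (hinterior q hq)]
  have hmeas : MeasurableSet (Ioo (0 : ℝ) 1 ×ˢ Ioo (-π) π) :=
    measurableSet_Ioo.prod measurableSet_Ioo
  have hint : IntegrableOn (fun q => q.1 * c (polarCoord.symm q))
      (Ioo (0 : ℝ) 1 ×ˢ Ioo (-π) π) :=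
    ((continuousOn_fst.mul
      (hc.comp continuous_polarCoord_symm.continuousOn hmaps)).integrableOn_compact
        isCompact_Icc).congr_set_ae (Ioo_prod_Ioo_ae_eq_Icc (0, -π) (1, π))
  have hgreen := integral_curl_Ioo_prod_Ioo (a := (0, -π)) (b := (1, π))
    (Prod.mk_le_mk.2 ⟨zero_le_one, by linarith [pi_pos]⟩)
    (continuousOn_pullbackForm contDiff_polarCoord_symm hγ hmaps)
    (fun q hq => (hasFDerivAt_pullbackForm contDiff_polarCoord_symm.contDiffAt
      (hγ' _ (hinterior q hq))).differentiableAt)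
    (hint.congr_fun hcurl_polar.symm hmeas)
  rw [setIntegral_disk_eq_polarCoord]
  simp only [smul_eq_mul]
  rw [← setIntegral_congr_fun hmeas hcurl_polar]
  refine hgreen.trans ?_
  simp [pullbackForm_polarCoord_symm_apply, tangential]

lemma setIntegral_wedge_disk {A : ℝ × ℝ → ℝ} {α β : ℝ × ℝ → ℝ × ℝ →L[ℝ] ℝ}
    (hA : ∀ p ∈ disk, HasFDerivWithinAt A (α p) disk p) (hα : ContinuousOn α disk)
    (hβ : ContinuousOn β disk) (hβ' : ∀ p ∈ interior disk, DifferentiableAt ℝ β p)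
    (hcurl : ∀ p ∈ interior disk, curl β p = 0) :
    ∫ p in disk, wedge (α p) (β p) =
      ∫ θ in (-π)..π, A (cos θ, sin θ) * tangential β θ := by
  have hA' : ∀ p ∈ interior disk, HasFDerivAt A (α p) p := fun p hp =>
    (hA p (interior_subset hp)).hasFDerivAt (mem_interior_iff_mem_nhds.1 hp)
  have hAc : ContinuousOn A disk := fun p hp => (hA p hp).continuousWithinAt
  refine setIntegral_curl_disk (γ := A • β) (hAc.smul hβ)
    (fun p hp => (hA' p hp).differentiableAt.smul (hβ' p hp)) (continuousOn_wedge hα hβ)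
    fun p hp => ?_
  rw [curl_smul (hA' p hp).differentiableAt (hβ' p hp), (hA' p hp).fderiv, hcurl p hp, mul_zero,
    add_zero]

end Green

section RealIntegrals

variable {a b : ℝ}

lemma integral_abs_le_of_neg_le_of_integral_eq_zero (hab : a ≤ b) {f : ℝ → ℝ} {c : ℝ}
    (hf : IntervalIntegrable f volume a b) (hf0 : ∫ x in a..b, f x = 0) (hc : 0 ≤ c)
    (hfc : ∀ x ∈ Icc a b, -c ≤ f x) : ∫ x in a..b, |f x| ≤ 2 * c * (b - a) :=
  calc ∫ x in a..b, |f x|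
      ≤ ∫ x in a..b, (f x + 2 * c) :=
        intervalIntegral.integral_mono_on hab hf.abs (hf.add intervalIntegrable_const)
          fun x hx => abs_le.2 ⟨by linarith [hfc x hx], by linarith⟩
    _ = 2 * c * (b - a) := by
        rw [intervalIntegral.integral_add hf intervalIntegrable_const, hf0,
          intervalIntegral.integral_const, smul_eq_mul]
        ring

lemma abs_sub_le_integral_abs_deriv {f f' : ℝ → ℝ} (hf : ∀ x ∈ Icc a b, HasDerivAt f (f' x) x)
    (hf' : IntervalIntegrable f' volume a b) {x : ℝ} (hx : x ∈ Icc a b) :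
    |f x - f a| ≤ ∫ y in a..b, |f' y| := by
  have hsub : uIcc a x ⊆ Icc a b := by
    rw [uIcc_of_le hx.1]
    exact Icc_subset_Icc_right hx.2
  have hf'_ax : IntervalIntegrable f' volume a x :=
    hf'.mono_set (by rwa [uIcc_of_le (hx.1.trans hx.2)])
  calc |f x - f a| = |∫ y in a..x, f' y| := by
        rw [intervalIntegral.integral_eq_sub_of_hasDerivAt (fun y hy => hf y (hsub hy)) hf'_ax]
    _ ≤ ∫ y in a..x, |f' y| := intervalIntegral.abs_integral_le_integral_abs hx.1
    _ ≤ ∫ y in a..b, |f' y| :=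
        intervalIntegral.integral_mono_interval le_rfl hx.1 hx.2
          (Eventually.of_forall fun y => abs_nonneg (f' y)) hf'.abs

lemma abs_integral_mul_le_of_integral_eq_zero (hab : a ≤ b) {u w : ℝ → ℝ} {K M : ℝ}
    (hu : ContinuousOn u (uIcc a b)) (hw : IntervalIntegrable w volume a b)
    (hw0 : ∫ x in a..b, w x = 0) (huM : ∀ x ∈ Icc a b, |u x - K| ≤ M) :
    |∫ x in a..b, u x * w x| ≤ M * ∫ x in a..b, |w x| := by
  have huw := hw.continuousOn_mul hu
  have huKw := hw.continuousOn_mul (hu.sub (continuousOn_const (c := K)))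
  calc |∫ x in a..b, u x * w x| = |∫ x in a..b, (u x - K) * w x| := by
        simp only [sub_mul]
        rw [intervalIntegral.integral_sub huw (hw.const_mul K),
          intervalIntegral.integral_const_mul, hw0, mul_zero, sub_zero]
    _ ≤ ∫ x in a..b, |(u x - K) * w x| := intervalIntegral.abs_integral_le_integral_abs hab
    _ ≤ ∫ x in a..b, M * |w x| :=
        intervalIntegral.integral_mono_on hab huKw.abs (hw.abs.const_mul M) fun x hx => by
          rw [abs_mul]
          exact mul_le_mul_of_nonneg_right (huM x hx) (abs_nonneg _)
    _ = M * ∫ x in a..b, |w x| := intervalIntegral.integral_const_mul _ _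

end RealIntegrals

section Circle

lemma hasDerivAt_cos_sin (θ : ℝ) :
    HasDerivAt (fun t : ℝ => (cos t, sin t)) (-sin θ, cos θ) θ :=
  (hasDerivAt_cos θ).prodMk (hasDerivAt_sin θ)

variable {A : ℝ × ℝ → ℝ} {α : ℝ × ℝ → ℝ × ℝ →L[ℝ] ℝ}

lemma continuous_tangential (hα : ContinuousOn α bdry) : Continuous (tangential α) :=
  (hα.comp_continuous (by fun_prop) cos_sin_mem_bdry).clm_apply (by fun_prop)

lemma hasDerivAt_comp_cos_sin (hA : ∀ p ∈ bdry, HasFDerivWithinAt A (α p) bdry p) (θ : ℝ) :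
    HasDerivAt (fun t => A (cos t, sin t)) (tangential α θ) θ :=
  hasDerivWithinAt_univ.1 <| (hA _ (cos_sin_mem_bdry θ)).comp_hasDerivWithinAt θ
    (hasDerivAt_cos_sin θ).hasDerivWithinAt fun t _ => cos_sin_mem_bdry t

lemma integral_tangential_eq_zero (hA : ∀ p ∈ bdry, HasFDerivWithinAt A (α p) bdry p)
    (hα : ContinuousOn α bdry) : ∫ θ in (-π)..π, tangential α θ = 0 := by
  rw [intervalIntegral.integral_eq_sub_of_hasDerivAt (fun θ _ => hasDerivAt_comp_cos_sin hA θ)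
    ((continuous_tangential hα).intervalIntegrable _ _)]
  simp

lemma abs_sub_le_integral_abs_tangential (hA : ∀ p ∈ bdry, HasFDerivWithinAt A (α p) bdry p)
    (hα : ContinuousOn α bdry) {p : ℝ × ℝ} (hp : p ∈ bdry) :
    |A p - A (-1, 0)| ≤ ∫ θ in (-π)..π, |tangential α θ| := by
  obtain ⟨θ, hθ, rfl⟩ := exists_cos_sin_eq hp
  simpa using abs_sub_le_integral_abs_deriv (fun t _ => hasDerivAt_comp_cos_sin hA t)
    ((continuous_tangential hα).intervalIntegrable _ _) (Ioc_subset_Icc_self hθ)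

end Circle

section MapsOfTheDisk

-- Local injectivity of `f` identifies `k (f x)` with `x`, since both have the same image.
lemma eventually_comp_eq_of_eventually_rightInverse {E F : Type*} [NormedAddCommGroup E]
    [NormedSpace ℝ E] [CompleteSpace E] [NormedAddCommGroup F] [NormedSpace ℝ F] {f : E → F}
    {k : F → E} {f' : E ≃L[ℝ] F} {a : E} (hf : HasStrictFDerivAt f (f' : E →L[ℝ] F) a)
    (hk : ContinuousAt k (f a)) (hka : k (f a) = a) (hfk : ∀ᶠ y in 𝓝 (f a), f (k y) = y) :
    ∀ᶠ x in 𝓝 a, k (f x) = x := by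
  set e := hf.toOpenPartialHomeomorph f
  have hsource : e.source ∈ 𝓝 a := e.open_source.mem_nhds hf.mem_toOpenPartialHomeomorph_source
  have hkf : Tendsto (k ∘ f) (𝓝 a) (𝓝 a) := by
    simpa only [hka, comp_apply] using (hk.comp hf.continuousAt).tendsto
  filter_upwards [hsource, hkf hsource, hf.continuousAt hfk] with x hx hkx hfx
  exact e.injOn hkx hx hfx

lemma hasFDerivAt_fst_sq_add_snd_sq (q : ℝ × ℝ) :
    HasFDerivAt (fun p : ℝ × ℝ => p.1 ^ 2 + p.2 ^ 2)
      ((2 : ℝ) • (q.1 • ContinuousLinearMap.fst ℝ ℝ ℝ + q.2 • ContinuousLinearMap.snd ℝ ℝ ℝ))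
      q := by
  refine ((hasFDerivAt_fst.pow 2).add (hasFDerivAt_snd.pow 2)).congr_fderiv ?_
  ext <;> simp

lemma area_pos_of_orthogonal {q n w : ℝ × ℝ} (hq : q ∈ bdry) (hqw : q.1 * w.1 + q.2 * w.2 = 0)
    (hqn : 0 ≤ q.1 * n.1 + q.2 * n.2) (hnw : 0 < area n w) : 0 < area q w := by
  have hq : q.1 ^ 2 + q.2 ^ 2 = 1 := hq
  have harea : (q.1 * n.1 + q.2 * n.2) * area q w = area n w := by
    simp only [area]
    linear_combination (n.1 * w.2 - n.2 * w.1) * hq + (q.1 * n.2 - q.2 * n.1) * hqw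
  exact pos_of_mul_pos_right (harea ▸ hnw) hqn

variable {g : ℝ × ℝ → ℝ × ℝ}

lemma fderiv_tangent_orthogonal (hg : MapsTo g bdry bdry) {θ : ℝ}
    (hgd : DifferentiableAt ℝ g (cos θ, sin θ)) :
    (g (cos θ, sin θ)).1 * (fderiv ℝ g (cos θ, sin θ) (-sin θ, cos θ)).1 +
      (g (cos θ, sin θ)).2 * (fderiv ℝ g (cos θ, sin θ) (-sin θ, cos θ)).2 = 0 := by
  have hderiv := ((hasFDerivAt_fst_sq_add_snd_sq (g (cos θ, sin θ))).comp _
    hgd.hasFDerivAt).comp_hasDerivAt θ (hasDerivAt_cos_sin θ)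
  have hcircle (t : ℝ) : (g (cos t, sin t)).1 ^ 2 + (g (cos t, sin t)).2 ^ 2 = 1 :=
    hg (cos_sin_mem_bdry t)
  have hconst : HasDerivAt (fun t : ℝ => (g (cos t, sin t)).1 ^ 2 + (g (cos t, sin t)).2 ^ 2)
      0 θ := by
    simpa only [hcircle] using hasDerivAt_const θ (1 : ℝ)
  have horth := hderiv.unique hconst
  simp only [ContinuousLinearMap.comp_apply, _root_.smul_apply, _root_.add_apply,
    ContinuousLinearMap.coe_fst', ContinuousLinearMap.coe_snd', smul_eq_mul] at horth
  linarith

lemma fderiv_radial_nonneg (hg : MapsTo g disk disk) {p : ℝ × ℝ} (hp : p ∈ disk)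
    (hgp : g p ∈ bdry) (hgd : DifferentiableAt ℝ g p) :
    0 ≤ (g p).1 * (fderiv ℝ g p p).1 + (g p).2 * (fderiv ℝ g p p).2 := by
  have hderiv := (hasFDerivAt_fst_sq_add_snd_sq (g p)).comp p hgd.hasFDerivAt
  have hmax : IsMaxOn (fun q => (g q).1 ^ 2 + (g q).2 ^ 2) disk p := fun q hq =>
    (hg hq).trans_eq hgp.symm
  have hcone : -p ∈ posTangentConeAt disk p := by
    simpa using sub_mem_posTangentConeAt_of_segment_subset
      (convex_disk.segment_subset hp (by simp [disk] : (0 : ℝ × ℝ) ∈ disk))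
  have hinward := hmax.localize.hasFDerivWithinAt_nonpos hderiv.hasFDerivWithinAt hcone
  simp only [map_neg, ContinuousLinearMap.comp_apply, _root_.smul_apply,
    _root_.add_apply, ContinuousLinearMap.coe_fst', ContinuousLinearMap.coe_snd',
    smul_eq_mul] at hinward
  linarith

end MapsOfTheDisk

section Liouville

/-- The Liouville form `λ = (x dy - y dx) / 2`, with `dλ = dx ∧ dy`. -/
def liouville : ℝ × ℝ →L[ℝ] ℝ × ℝ →L[ℝ] ℝ :=
  (1 / 2 : ℝ) • ((ContinuousLinearMap.fst ℝ ℝ ℝ).smulRight (ContinuousLinearMap.snd ℝ ℝ ℝ) -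
    (ContinuousLinearMap.snd ℝ ℝ ℝ).smulRight (ContinuousLinearMap.fst ℝ ℝ ℝ))

lemma liouville_apply (p v : ℝ × ℝ) : liouville p v = area p v / 2 := by
  simp only [liouville, area, _root_.smul_apply, _root_.sub_apply,
    ContinuousLinearMap.smulRight_apply, ContinuousLinearMap.coe_fst',
    ContinuousLinearMap.coe_snd', smul_eq_mul]
  ring

lemma curl_liouville (p : ℝ × ℝ) : curl liouville p = 1 := by
  norm_num [curl, ContinuousLinearMap.fderiv, liouville_apply, area]

lemma tangential_liouville (θ : ℝ) : tangential liouville θ = 1 / 2 := by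
  rw [tangential, liouville_apply, area]
  linear_combination cos_sq_add_sin_sq θ / 2

/-- The action form `α_g = g^*λ - λ` of a map `g` of the plane; it is closed where `g` preserves
area, and its primitives are the action functions of `g`. -/
def actionForm (g : ℝ × ℝ → ℝ × ℝ) : ℝ × ℝ → ℝ × ℝ →L[ℝ] ℝ :=
  pullbackForm g liouville - liouville

variable {g h : ℝ × ℝ → ℝ × ℝ}

lemma contDiff_pullbackForm_liouville (hg : ContDiff ℝ 2 g) :
    ContDiff ℝ 1 (pullbackForm g liouville) :=
  contDiff_pullbackForm hg liouville.contDiff one_add_one_eq_two.le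

lemma contDiff_actionForm (hg : ContDiff ℝ 2 g) : ContDiff ℝ 1 (actionForm g) :=
  (contDiff_pullbackForm_liouville hg).sub liouville.contDiff

lemma curl_actionForm (hg : ContDiff ℝ 2 g) (p : ℝ × ℝ) :
    curl (actionForm g) p = (fderiv ℝ g p).det - 1 := by
  rw [actionForm, curl_sub ((contDiff_pullbackForm_liouville hg).differentiable one_ne_zero p)
    liouville.differentiableAt, curl_pullbackForm hg.contDiffAt liouville.differentiableAt,
    curl_liouville, curl_liouville, mul_one]

lemma actionForm_comp (hg : Differentiable ℝ g) (hh : Differentiable ℝ h) :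
    actionForm (g ∘ h) = pullbackForm h (actionForm g) + actionForm h := by
  rw [actionForm, actionForm, actionForm, pullbackForm_comp hg hh, pullbackForm_sub]
  abel

lemma fderiv_fst_comp (hg : Differentiable ℝ g) (p v : ℝ × ℝ) :
    fderiv ℝ (fun q => (g q).1) p v = (fderiv ℝ g p v).1 := by
  rw [(hg p).hasFDerivAt.fst.fderiv]
  rfl

lemma fderiv_snd_comp (hg : Differentiable ℝ g) (p v : ℝ × ℝ) :
    fderiv ℝ (fun q => (g q).2) p v = (fderiv ℝ g p v).2 := by
  rw [(hg p).hasFDerivAt.snd.fderiv]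
  rfl

lemma jacDet_eq_det_fderiv (hg : Differentiable ℝ g) (p : ℝ × ℝ) :
    jacDet g p = (fderiv ℝ g p).det := by
  simp only [jacDet, pdx, pdy, fderiv_fst_comp hg, fderiv_snd_comp hg, det_eq_area, area]
  ring

lemma tauL_eq_setIntegral_wedge_pullbackForm (hg : Differentiable ℝ g) :
    tauL g = ∫ p in disk, wedge (pullbackForm g liouville p) (liouville p) := by
  rw [tauL, ← integral_const_mul]
  congr 1 with p
  simp only [wedge, pullbackForm, ContinuousLinearMap.comp_apply, liouville_apply, area, pdx, pdy,
    fderiv_fst_comp hg, fderiv_snd_comp hg]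
  ring

lemma tauL_eq_setIntegral_wedge_actionForm (hg : Differentiable ℝ g) :
    tauL g = ∫ p in disk, wedge (actionForm g p) (liouville p) := by
  rw [tauL_eq_setIntegral_wedge_pullbackForm hg]
  congr 1 with p
  simp only [actionForm, wedge, Pi.sub_apply, _root_.sub_apply]
  ring

end Liouville

namespace IsSymp

variable {g h : ℝ × ℝ → ℝ × ℝ}

lemma contDiff (hg : IsSymp g) : ContDiff ℝ 2 g := contDiff_infty.1 hg.1 2

lemma differentiable (hg : IsSymp g) : Differentiable ℝ g := hg.1.differentiable (by simp)

lemma mapsTo_disk (hg : IsSymp g) : MapsTo g disk disk := hg.2.1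

lemma det_fderiv (hg : IsSymp g) {p : ℝ × ℝ} (hp : p ∈ disk) : (fderiv ℝ g p).det = 1 := by
  rw [← jacDet_eq_det_fderiv hg.differentiable, hg.2.2.1 p hp]

lemma bijOn_disk (hg : IsSymp g) : BijOn g disk disk := by
  obtain ⟨-, hgm, -, k, -, hkm, hkg, hgk⟩ := hg
  exact InvOn.bijOn ⟨hkg, hgk⟩ hgm hkm

lemma mapsTo_bdry (hg : IsSymp g) : MapsTo g bdry bdry := by
  intro p hp
  rw [← diff_interior_disk] at hp ⊢
  refine ⟨hg.mapsTo_disk hp.1, fun hgp => hp.2 ?_⟩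
  obtain ⟨k, hk, hkm, hkg, hgk⟩ := hg.2.2.2
  have hdet : (fderiv ℝ g p).det ≠ 0 := by
    rw [hg.det_fderiv hp.1]
    exact one_ne_zero
  have hstrict : HasStrictFDerivAt g
      ((fderiv ℝ g p).toContinuousLinearEquivOfDetNeZero hdet : ℝ × ℝ →L[ℝ] ℝ × ℝ) p :=
    hg.contDiff.contDiffAt.hasStrictFDerivAt two_ne_zero
  have hdisk : disk ∈ 𝓝 (g p) := mem_interior_iff_mem_nhds.1 hgp
  have hkg' := eventually_comp_eq_of_eventually_rightInverse hstrict hk.continuous.continuousAt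
    (hkg p hp.1) (mem_of_superset hdisk hgk)
  rw [mem_interior_iff_mem_nhds]
  filter_upwards [hkg', hg.differentiable.continuous.continuousAt hdisk] with q hq hgq
  exact hq ▸ hkm hgq

lemma neg_half_le_tangential_actionForm (hg : IsSymp g) (θ : ℝ) :
    -(1 / 2) ≤ tangential (actionForm g) θ := by
  have hp := cos_sin_mem_bdry θ
  have hdet := area_map (fderiv ℝ g (cos θ, sin θ)) (cos θ, sin θ) (-sin θ, cos θ)
  have hframe : area (cos θ, sin θ) (-sin θ, cos θ) = 1 := by
    rw [area]
    linear_combination cos_sq_add_sin_sq θ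
  rw [hg.det_fderiv (bdry_subset_disk hp), hframe, one_mul] at hdet
  have harea := area_pos_of_orthogonal (hg.mapsTo_bdry hp)
    (fderiv_tangent_orthogonal hg.mapsTo_bdry (hg.differentiable _))
    (fderiv_radial_nonneg hg.mapsTo_disk (bdry_subset_disk hp) (hg.mapsTo_bdry hp)
      (hg.differentiable _)) (hdet ▸ one_pos)
  have hpullback : tangential (pullbackForm g liouville) θ =
      area (g (cos θ, sin θ)) (fderiv ℝ g (cos θ, sin θ) (-sin θ, cos θ)) / 2 :=
    liouville_apply _ _
  have hsub : tangential (actionForm g) θ =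
      tangential (pullbackForm g liouville) θ - tangential liouville θ := rfl
  rw [hsub, hpullback, tangential_liouville]
  linarith

lemma continuousOn_actionForm (hg : IsSymp g) (s : Set (ℝ × ℝ)) : ContinuousOn (actionForm g) s :=
  (contDiff_actionForm hg.contDiff).continuous.continuousOn

lemma differentiable_actionForm (hg : IsSymp g) : Differentiable ℝ (actionForm g) :=
  (contDiff_actionForm hg.contDiff).differentiable one_ne_zero

lemma curl_actionForm_eq_zero (hg : IsSymp g) {p : ℝ × ℝ} (hp : p ∈ disk) :
    curl (actionForm g) p = 0 := by
  rw [curl_actionForm hg.contDiff, hg.det_fderiv hp, sub_self]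

lemma exists_hasFDerivWithinAt_actionForm (hg : IsSymp g) :
    ∃ F : ℝ × ℝ → ℝ, ∀ p ∈ disk, HasFDerivWithinAt F (actionForm g p) disk p :=
  exists_hasFDerivWithinAt_of_curl_eq_zero convex_disk
    (fun p _ => hg.differentiable_actionForm p) fun _ hp => hg.curl_actionForm_eq_zero hp

lemma continuousOn_pullbackForm_disk (hh : IsSymp h) {α : ℝ × ℝ → ℝ × ℝ →L[ℝ] ℝ}
    (hα : ContinuousOn α disk) : ContinuousOn (pullbackForm h α) disk :=
  continuousOn_pullbackForm (hh.contDiff.of_le one_le_two) hα hh.mapsTo_disk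

lemma setIntegral_wedge_pullbackForm (hh : IsSymp h) (α β : ℝ × ℝ → ℝ × ℝ →L[ℝ] ℝ) :
    ∫ p in disk, wedge (pullbackForm h α p) (pullbackForm h β p) =
      ∫ p in disk, wedge (α p) (β p) := by
  have hmeas := isCompact_disk.measurableSet
  have hsubst := integral_image_eq_integral_abs_det_fderiv_smul volume hmeas
    (fun p _ => (hh.differentiable p).hasFDerivAt.hasFDerivWithinAt) hh.bijOn_disk.injOn
    fun p => wedge (α p) (β p)
  rw [hh.bijOn_disk.image_eq] at hsubst
  rw [hsubst]
  refine setIntegral_congr_fun hmeas fun p hp => ?_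
  simp only [pullbackForm, wedge_comp, hh.det_fderiv hp, abs_one, one_mul, one_smul]

lemma tauL_comp_sub_sub (hg : IsSymp g) (hh : IsSymp h) :
    tauL (g ∘ h) - tauL g - tauL h =
      -∫ p in disk, wedge (pullbackForm h (actionForm g) p) (actionForm h p) := by
  have hαh := hh.continuousOn_actionForm disk
  have hpull := hh.continuousOn_pullbackForm_disk (hg.continuousOn_actionForm disk)
  have hl : ContinuousOn liouville disk := liouville.continuous.continuousOn
  have hint {α β : ℝ × ℝ → ℝ × ℝ →L[ℝ] ℝ} (hα : ContinuousOn α disk) (hβ : ContinuousOn β disk) :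
      IntegrableOn (fun p => wedge (α p) (β p)) disk :=
    (continuousOn_wedge hα hβ).integrableOn_compact isCompact_disk
  have hcomp : tauL (g ∘ h) =
      (∫ p in disk, wedge (pullbackForm h (actionForm g) p) (liouville p)) + tauL h := by
    rw [tauL_eq_setIntegral_wedge_actionForm (hg.differentiable.comp hh.differentiable),
      actionForm_comp hg.differentiable hh.differentiable,
      tauL_eq_setIntegral_wedge_actionForm hh.differentiable,
      ← integral_add (hint hpull hl) (hint hαh hl)]
    simp only [Pi.add_apply, wedge_add_left]
  have hpullback : tauL g =
      (∫ p in disk, wedge (pullbackForm h (actionForm g) p) (liouville p)) +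
        ∫ p in disk, wedge (pullbackForm h (actionForm g) p) (actionForm h p) := by
    rw [tauL_eq_setIntegral_wedge_actionForm hg.differentiable,
      ← hh.setIntegral_wedge_pullbackForm, ← integral_add (hint hpull hl) (hint hpull hαh)]
    simp only [← wedge_add_right, actionForm, Pi.sub_apply, add_sub_cancel]
  rw [hcomp, hpullback]
  ring

lemma integral_tangential_actionForm (hg : IsSymp g) :
    ∫ θ in (-π)..π, tangential (actionForm g) θ = 0 := by
  obtain ⟨F, hF⟩ := hg.exists_hasFDerivWithinAt_actionForm
  exact integral_tangential_eq_zero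
    (fun p hp => (hF p (bdry_subset_disk hp)).mono bdry_subset_disk) (hg.continuousOn_actionForm _)

lemma integral_abs_tangential_actionForm_le (hg : IsSymp g) :
    ∫ θ in (-π)..π, |tangential (actionForm g) θ| ≤ 2 * π :=
  (integral_abs_le_of_neg_le_of_integral_eq_zero (neg_le_self pi_nonneg)
    ((continuous_tangential (hg.continuousOn_actionForm _)).intervalIntegrable _ _)
    hg.integral_tangential_actionForm one_half_pos.le
    fun θ _ => hg.neg_half_le_tangential_actionForm θ).trans_eq (by ring)

lemma abs_primitive_sub_le (hg : IsSymp g) {F : ℝ × ℝ → ℝ}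
    (hF : ∀ p ∈ disk, HasFDerivWithinAt F (actionForm g p) disk p) {p : ℝ × ℝ} (hp : p ∈ bdry) :
    |F p - F (-1, 0)| ≤ 2 * π :=
  (abs_sub_le_integral_abs_tangential
    (fun q hq => (hF q (bdry_subset_disk hq)).mono bdry_subset_disk)
    (hg.continuousOn_actionForm _) hp).trans hg.integral_abs_tangential_actionForm_le

lemma setIntegral_wedge_pullbackForm_actionForm (hg : IsSymp g) (hh : IsSymp h) {F : ℝ × ℝ → ℝ}
    (hF : ∀ p ∈ disk, HasFDerivWithinAt F (actionForm g p) disk p) :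
    ∫ p in disk, wedge (pullbackForm h (actionForm g) p) (actionForm h p) =
      ∫ θ in (-π)..π, F (h (cos θ, sin θ)) * tangential (actionForm h) θ :=
  setIntegral_wedge_disk (A := F ∘ h)
    (fun p hp => hasFDerivWithinAt_comp_pullbackForm (hF _ (hh.mapsTo_disk hp))
      (hh.differentiable p) hh.mapsTo_disk)
    (hh.continuousOn_pullbackForm_disk (hg.continuousOn_actionForm disk))
    (hh.continuousOn_actionForm disk) (fun p _ => hh.differentiable_actionForm p)
    fun _ hp => hh.curl_actionForm_eq_zero (interior_subset hp)

lemma abs_integral_mul_tangential_actionForm_le (hh : IsSymp h) {u : ℝ → ℝ} (hu : Continuous u)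
    {K M : ℝ} (huM : ∀ θ, |u θ - K| ≤ M) :
    |∫ θ in (-π)..π, u θ * tangential (actionForm h) θ| ≤ M * (2 * π) :=
  (abs_integral_mul_le_of_integral_eq_zero (neg_le_self pi_nonneg) hu.continuousOn
    ((continuous_tangential (hh.continuousOn_actionForm _)).intervalIntegrable _ _)
    hh.integral_tangential_actionForm fun θ _ => huM θ).trans <|
  mul_le_mul_of_nonneg_left hh.integral_abs_tangential_actionForm_le
    ((abs_nonneg _).trans (huM 0))

end IsSymp

/-- `τ_λ : Symp(D) → ℝ` is a quasi-morphism: there is a constant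
`C` with `|τ_λ(g ∘ h) - τ_λ(g) - τ_λ(h)| ≤ C` for all `g, h ∈ Symp(D)`. -/
theorem tauL_quasimorphism :
    ∃ C : ℝ, ∀ g h : ℝ × ℝ → ℝ × ℝ, IsSymp g → IsSymp h →
      |tauL (g ∘ h) - tauL g - tauL h| ≤ C := by
  refine ⟨2 * π * (2 * π), fun g h hg hh => ?_⟩
  obtain ⟨F, hF⟩ := hg.exists_hasFDerivWithinAt_actionForm
  have hosc (θ : ℝ) : |F (h (cos θ, sin θ)) - F (-1, 0)| ≤ 2 * π :=
    hg.abs_primitive_sub_le hF (hh.mapsTo_bdry (cos_sin_mem_bdry θ))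
  have hcont : Continuous fun θ : ℝ => F (h (cos θ, sin θ)) :=
    ContinuousOn.comp_continuous (s := disk) (fun p hp => (hF p hp).continuousWithinAt)
      (hh.differentiable.continuous.comp (by fun_prop))
      fun θ => hh.mapsTo_disk (bdry_subset_disk (cos_sin_mem_bdry θ))
  rw [hg.tauL_comp_sub_sub hh, abs_neg, hg.setIntegral_wedge_pullbackForm_actionForm hh hF]
  exact hh.abs_integral_mul_tangential_actionForm_le hcont hosc
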